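/- Let q ∈ [1,∞], α_1, α_2 ≥ 0, and consider the two-player zero-sum robust matrix game with nominal payoff r* ∈ ℝ^{𝒜_1×𝒜_2} and operator-norm-ball uncertainty sets ℛ_1 = {R ∈ ℝ^{𝒜_1×𝒜_2} : ‖R‖_{1→q} ≤ α_1} and ℛ_2 = {R ∈ ℝ^{𝒜_1×𝒜_2} : ‖Rᵀ‖_{1→q} ≤ α_2}. Then for all (π_1, π_2) ∈ Δ(𝒜_1)×Δ(𝒜_2): σ_{ℛ_1}(−π_1π_2ᵀ) = α_1 ‖π_1‖_{q*} and σ_{ℛ_2}(−π_1π_2ᵀ) = α_2 ‖π_2‖_{q*}. Consequently, (π_1, π_2) is a robust Nash equilibrium of this robust game if and only if it is a Nash equilibrium of the zero-sum regularized game with payoff f(π_1,π_2) = π_1ᵀ r* π_2 − α_1‖π_1‖_{q*} + α_2‖π_2‖_{q*} (player 1 maximizing, player 2 minimizing). -/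

import Mathlib

/-! Writing `bil x π₁ π₂ = ⟨π₁, x π₂⟩`, Hölder's inequality and `‖π₂‖₁ = 1` give
`-bil x π₁ π₂ ≤ ‖π₁‖_{q*} ‖x π₂‖_q ≤ ‖π₁‖_{q*} ‖x‖_{1→q}`. Equality is attained by the rank-one
matrix `x = -α v 1ᵀ`, where `‖v‖_q ≤ 1` and `⟨π₁, v⟩ = ‖π₁‖_{q*}`: on the simplex `1ᵀπ₂ = 1`, and
`|1ᵀy| ≤ ‖y‖₁` bounds its operator norm by `α` (`isGreatest_support`). Player 2 is the same
situation for the transposed matrices.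

Hence each robust value is the nominal value minus the player's own regularizer, and it differs
from `±normReg` only by a term depending on the opponent's strategy. The best-response sets are
bounded on the relevant side, so both equilibrium notions unfold to the same families of
inequalities. -/


open scoped ENNReal

/-- The vector `ℓ_p` norm on `ℝ^n`, for `p ∈ [1,∞]`. -/
noncomputable def lpNorm (p : ℝ≥0∞) {n : Type*} [Fintype n] (x : n → ℝ) : ℝ :=
  if p = ∞ then ⨆ i, |x i| else (∑ i, |x i| ^ p.toReal) ^ (1 / p.toReal)

/-- The `ℓ_p → ℓ_q` operator norm of a real matrix:
`‖B‖_{p→q} = sup {‖Bx‖_q : ‖x‖_p = 1}`. -/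
noncomputable def opNorm (p q : ℝ≥0∞) {m n : Type*} [Fintype m] [Fintype n]
    (B : Matrix m n ℝ) : ℝ :=
  sSup {c : ℝ | ∃ x : n → ℝ, lpNorm p x = 1 ∧ c = lpNorm q (B.mulVec x)}

open scoped BigOperators

/-- The probability simplex `Δ(T)` over a finite set `T`. -/
def probSimplex (T : Type*) [Fintype T] : Set (T → ℝ) :=
  {x | (∀ t, 0 ≤ x t) ∧ ∑ t, x t = 1}

/-- The bilinear form `π_1ᵀ M π_2 = Σ_{a_1,a_2} π_1(a_1) M(a_1,a_2) π_2(a_2)`. -/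
noncomputable def bil {A1 A2 : Type*} [Fintype A1] [Fintype A2]
    (M : Matrix A1 A2 ℝ) (π1 : A1 → ℝ) (π2 : A2 → ℝ) : ℝ :=
  ∑ a1, ∑ a2, π1 a1 * M a1 a2 * π2 a2

/-- Player 1's robust value in the two-player zero-sum robust matrix game:
`V_1(π_1,π_2) = inf_{x ∈ ℛ_1} π_1ᵀ (r* + x) π_2`. -/
noncomputable def V1 {A1 A2 : Type*} [Fintype A1] [Fintype A2]
    (rstar : Matrix A1 A2 ℝ) (R1 : Set (Matrix A1 A2 ℝ))
    (π1 : A1 → ℝ) (π2 : A2 → ℝ) : ℝ :=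
  sInf {t : ℝ | ∃ x ∈ R1, t = bil (rstar + x) π1 π2}

/-- Player 2's robust value in the two-player zero-sum robust matrix game:
`V_2(π_1,π_2) = inf_{x ∈ ℛ_2} π_1ᵀ (−r* + x) π_2`. -/
noncomputable def V2 {A1 A2 : Type*} [Fintype A1] [Fintype A2]
    (rstar : Matrix A1 A2 ℝ) (R2 : Set (Matrix A1 A2 ℝ))
    (π1 : A1 → ℝ) (π2 : A2 → ℝ) : ℝ :=
  sInf {t : ℝ | ∃ x ∈ R2, t = bil (-rstar + x) π1 π2}


/-- The zero-sum regularized payoff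
`f(π_1,π_2) = π_1ᵀ r* π_2 − α_1 ‖π_1‖_{q*} + α_2 ‖π_2‖_{q*}`. -/
noncomputable def normReg {A1 A2 : Type*} [Fintype A1] [Fintype A2]
    (qstar : ℝ≥0∞) (α1 α2 : ℝ) (rstar : Matrix A1 A2 ℝ)
    (π1 : A1 → ℝ) (π2 : A2 → ℝ) : ℝ :=
  bil rstar π1 π2 - α1 * lpNorm qstar π1 + α2 * lpNorm qstar π2

lemma lpNorm_nonneg {n : Type*} [Fintype n] (p : ℝ≥0∞) (x : n → ℝ) : 0 ≤ lpNorm p x := by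
  unfold lpNorm
  split_ifs
  · exact Real.iSup_nonneg fun i => abs_nonneg _
  · positivity

lemma lpNorm_mono {n : Type*} [Fintype n] (p : ℝ≥0∞) {x y : n → ℝ} (h : ∀ i, |x i| ≤ |y i|) :
    lpNorm p x ≤ lpNorm p y := by
  unfold lpNorm
  split_ifs
  · exact ciSup_mono (Set.finite_range _).bddAbove h
  · exact Real.rpow_le_rpow (by positivity) (Finset.sum_le_sum fun i _ =>
      Real.rpow_le_rpow (abs_nonneg _) (h i) ENNReal.toReal_nonneg) (by positivity)

lemma lpNorm_one {n : Type*} [Fintype n] (x : n → ℝ) : lpNorm 1 x = ∑ i, |x i| := by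
  simp [lpNorm]

lemma lpNorm_top {n : Type*} [Fintype n] (x : n → ℝ) : lpNorm ∞ x = ⨆ i, |x i| := by
  simp [lpNorm]

lemma abs_le_lpNorm_top {n : Type*} [Fintype n] (x : n → ℝ) (i : n) : |x i| ≤ lpNorm ∞ x := by
  rw [lpNorm_top]
  exact le_ciSup (f := fun i => |x i|) (Set.finite_range _).bddAbove i

/-- For `p ≥ 1`, `lpNorm` is the norm of Mathlib's `PiLp`. -/
lemma lpNorm_eq_norm {n : Type*} [Fintype n] (p : ℝ≥0∞) (hp : 1 ≤ p) (x : n → ℝ) :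
    lpNorm p x = ‖WithLp.toLp p x‖ := by
  unfold lpNorm
  split_ifs with h
  · subst h
    simp [PiLp.norm_eq_ciSup]
  · have : 0 < p.toReal := ENNReal.toReal_pos (by positivity) h
    simp [PiLp.norm_eq_sum this]

lemma lpNorm_smul {n : Type*} [Fintype n] (p : ℝ≥0∞) (hp : 1 ≤ p) (c : ℝ) (x : n → ℝ) :
    lpNorm p (c • x) = |c| * lpNorm p x := by
  have : Fact (1 ≤ p) := ⟨hp⟩
  rw [lpNorm_eq_norm p hp, lpNorm_eq_norm p hp, WithLp.toLp_smul, norm_smul, Real.norm_eq_abs]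

/-- The three possible shapes of a pair of Hölder conjugate exponents in `[1,∞]`. -/
lemma conj_cases {q r : ℝ≥0∞} (h : 1 / q + 1 / r = 1) :
    (q = 1 ∧ r = ∞) ∨ (q = ∞ ∧ r = 1) ∨
      (q ≠ ∞ ∧ r ≠ ∞ ∧ r.toReal.HolderConjugate q.toReal) := by
  by_cases hq : q = ∞
  · subst hq
    right; left
    simpa using h
  by_cases hr : r = ∞
  · subst hr
    left
    simpa using h
  · right; right
    have hq0 : q ≠ 0 := by rintro rfl; simp at h
    have hr0 : r ≠ 0 := by rintro rfl; simp at h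
    refine ⟨hq, hr, ⟨?_, ENNReal.toReal_pos hr0 hr, ENNReal.toReal_pos hq0 hq⟩⟩
    have h' := congrArg ENNReal.toReal h
    rw [ENNReal.toReal_add (by simpa using hq0) (by simpa using hr0)] at h'
    simp only [one_div, ENNReal.toReal_inv, ENNReal.toReal_one] at h'
    rw [inv_one, ← h', add_comm]

lemma holder {n : Type*} [Fintype n] {q r : ℝ≥0∞} (h : 1 / q + 1 / r = 1) (x y : n → ℝ) :
    ∑ i, x i * y i ≤ lpNorm r x * lpNorm q y := by
  rcases conj_cases h with ⟨rfl, rfl⟩ | ⟨rfl, rfl⟩ | ⟨hq, hr, hc⟩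
  · rw [lpNorm_one, Finset.mul_sum]
    refine Finset.sum_le_sum fun i _ => ?_
    refine (le_abs_self _).trans ?_
    rw [abs_mul]
    gcongr
    exact abs_le_lpNorm_top x i
  · rw [lpNorm_one, Finset.sum_mul]
    refine Finset.sum_le_sum fun i _ => ?_
    refine (le_abs_self _).trans ?_
    rw [abs_mul]
    gcongr
    exact abs_le_lpNorm_top y i
  · simpa [lpNorm, hq, hr] using Real.inner_le_Lp_mul_Lq Finset.univ x y hc

/-- Equality case of Hölder's inequality for nonnegative vectors. -/
lemma exists_dual {n : Type*} [Fintype n] [Nonempty n] {q r : ℝ≥0∞} (h : 1 / q + 1 / r = 1)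
    (x : n → ℝ) (hx : ∀ i, 0 ≤ x i) :
    ∃ v : n → ℝ, lpNorm q v ≤ 1 ∧ ∑ i, x i * v i = lpNorm r x := by
  classical
  rcases conj_cases h with ⟨rfl, rfl⟩ | ⟨rfl, rfl⟩ | ⟨hq, hr, hc⟩
  · obtain ⟨j, hj⟩ := exists_eq_ciSup_of_finite (f := fun i => |x i|)
    refine ⟨Pi.single j 1, ?_, ?_⟩
    · simp [lpNorm_one, Pi.single_apply, apply_ite abs]
    · rw [lpNorm_top, ← hj]
      simp [Pi.single_apply, abs_of_nonneg (hx j)]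
  · refine ⟨fun _ => 1, ?_, ?_⟩
    · simp [lpNorm_top]
    · simp [lpNorm_one, abs_of_nonneg, hx]
  · lift x to n → NNReal using hx
    obtain ⟨⟨g, hg, hgx⟩, -⟩ := NNReal.isGreatest_Lp (Finset.univ : Finset n) x hc
    refine ⟨fun i => g i, ?_, ?_⟩
    · have hg' : ∑ i, (g i : ℝ) ^ q.toReal ≤ 1 := by exact_mod_cast hg
      simp only [lpNorm, hq, if_false, NNReal.abs_eq]
      exact Real.rpow_le_one (by positivity) hg' (by positivity)
    · have := congrArg NNReal.toReal hgx
      push_cast at this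
      simpa [lpNorm, hr] using this

/-- The set defining `opNorm 1 q B` is bounded, so its supremum is not a junk value. -/
lemma lpNorm_mulVec_le_opNorm {m n : Type*} [Fintype m] [Fintype n] (q : ℝ≥0∞)
    (B : Matrix m n ℝ) (x : n → ℝ) (hx : lpNorm 1 x = 1) :
    lpNorm q (B.mulVec x) ≤ opNorm 1 q B := by
  refine le_csSup ⟨lpNorm q fun i => ∑ j, |B i j|, ?_⟩ ⟨x, hx, rfl⟩
  rintro _ ⟨y, hy, rfl⟩
  refine lpNorm_mono q fun i => ?_
  rw [abs_of_nonneg (Finset.sum_nonneg fun j _ => abs_nonneg (B i j))]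
  refine (Finset.abs_sum_le_sum_abs _ _).trans (Finset.sum_le_sum fun j _ => ?_)
  rw [abs_mul]
  refine mul_le_of_le_one_right (abs_nonneg _) ?_
  rw [← hy, lpNorm_one]
  exact Finset.single_le_sum (f := fun j => |y j|) (fun _ _ => abs_nonneg _) (Finset.mem_univ j)

lemma bil_eq_sum_mulVec {A1 A2 : Type*} [Fintype A1] [Fintype A2]
    (M : Matrix A1 A2 ℝ) (u : A1 → ℝ) (v : A2 → ℝ) :
    bil M u v = ∑ i, u i * M.mulVec v i := by
  simp [bil, Matrix.mulVec, dotProduct, Finset.mul_sum, mul_assoc]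

lemma bil_transpose {A1 A2 : Type*} [Fintype A1] [Fintype A2]
    (M : Matrix A1 A2 ℝ) (u : A1 → ℝ) (v : A2 → ℝ) :
    bil M.transpose v u = bil M u v := by
  unfold bil
  rw [Finset.sum_comm]
  refine Finset.sum_congr rfl fun i _ => Finset.sum_congr rfl fun j _ => ?_
  rw [Matrix.transpose_apply]
  ring

lemma bil_add {A1 A2 : Type*} [Fintype A1] [Fintype A2]
    (M N : Matrix A1 A2 ℝ) (u : A1 → ℝ) (v : A2 → ℝ) :
    bil (M + N) u v = bil M u v + bil N u v := by
  simp [bil_eq_sum_mulVec, Matrix.add_mulVec, mul_add, Finset.sum_add_distrib]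

lemma bil_neg {A1 A2 : Type*} [Fintype A1] [Fintype A2]
    (M : Matrix A1 A2 ℝ) (u : A1 → ℝ) (v : A2 → ℝ) :
    bil (-M) u v = -bil M u v := by
  simp [bil_eq_sum_mulVec, Matrix.neg_mulVec]

lemma le_one_of_mem_probSimplex {T : Type*} [Fintype T] {u : T → ℝ} (hu : u ∈ probSimplex T)
    (i : T) : u i ≤ 1 := by
  rw [← hu.2]
  exact Finset.single_le_sum (fun j _ => hu.1 j) (Finset.mem_univ i)

lemma abs_bil_le {A1 A2 : Type*} [Fintype A1] [Fintype A2] (M : Matrix A1 A2 ℝ)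
    {u : A1 → ℝ} {v : A2 → ℝ} (hu : u ∈ probSimplex A1) (hv : v ∈ probSimplex A2) :
    |bil M u v| ≤ ∑ i, ∑ j, |M i j| := by
  refine (Finset.abs_sum_le_sum_abs _ _).trans (Finset.sum_le_sum fun i _ => ?_)
  refine (Finset.abs_sum_le_sum_abs _ _).trans (Finset.sum_le_sum fun j _ => ?_)
  rw [abs_mul, abs_mul, abs_of_nonneg (hu.1 i), abs_of_nonneg (hv.1 j)]
  exact mul_le_of_le_one_right (abs_nonneg _) (le_one_of_mem_probSimplex hv j) |>.trans'
    (mul_le_mul_of_nonneg_right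
      (mul_le_of_le_one_left (abs_nonneg _) (le_one_of_mem_probSimplex hu i)) (hv.1 j))

/-- The support function of the `1 → q` operator-norm ball at `-u vᵀ`, together with the fact
that the supremum is attained. -/
lemma isGreatest_support {A1 A2 : Type*} [Fintype A1] [Fintype A2] {q r : ℝ≥0∞} (hq : 1 ≤ q)
    (h : 1 / q + 1 / r = 1) {α : ℝ} (hα : 0 ≤ α) {u : A1 → ℝ} {v : A2 → ℝ}
    (hu : u ∈ probSimplex A1) (hv : v ∈ probSimplex A2) :
    IsGreatest {t : ℝ | ∃ x ∈ {R : Matrix A1 A2 ℝ | opNorm 1 q R ≤ α}, t = -bil x u v}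
      (α * lpNorm r u) := by
  constructor
  · have : Nonempty A1 := by
      by_contra hne
      rw [not_nonempty_iff] at hne
      simpa using hu.2
    obtain ⟨w, hw, hwu⟩ := exists_dual h u hu.1
    have key : ∀ y : A2 → ℝ,
        (Matrix.of fun i (_ : A2) => -(α * w i)).mulVec y = fun i => -(α * w i) * ∑ j, y j := by
      intro y
      ext i
      simp [Matrix.mulVec, dotProduct, Finset.mul_sum]
    refine ⟨Matrix.of fun i _ => -(α * w i), ?_, ?_⟩
    · refine Real.sSup_le ?_ hα
      rintro _ ⟨y, hy, rfl⟩
      have h1 : |∑ j, y j| ≤ 1 := by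
        rw [← hy, lpNorm_one]
        exact Finset.abs_sum_le_sum_abs _ _
      calc _ ≤ lpNorm q (α • w) := by
            refine lpNorm_mono q fun i => ?_
            rw [key, abs_mul, abs_neg]
            exact mul_le_of_le_one_right (abs_nonneg _) h1
        _ = α * lpNorm q w := by rw [lpNorm_smul q hq, abs_of_nonneg hα]
        _ ≤ α := mul_le_of_le_one_right hα hw
    · rw [bil_eq_sum_mulVec, key, hv.2, ← hwu, Finset.mul_sum, ← Finset.sum_neg_distrib]
      refine Finset.sum_congr rfl fun i _ => ?_
      ring
  · rintro _ ⟨x, hx, rfl⟩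
    have hv1 : lpNorm 1 v = 1 := by
      rw [lpNorm_one, ← hv.2]
      exact Finset.sum_congr rfl fun j _ => abs_of_nonneg (hv.1 j)
    have h1 := (lpNorm_mulVec_le_opNorm q x v hv1).trans hx
    have h2 := holder h u (-x.mulVec v)
    have h3 : lpNorm q (-x.mulVec v) ≤ lpNorm q (x.mulVec v) :=
      lpNorm_mono q fun i => by simp
    calc -bil x u v = ∑ i, u i * (-x.mulVec v) i := by simp [bil_eq_sum_mulVec]
      _ ≤ lpNorm r u * lpNorm q (-x.mulVec v) := h2
      _ ≤ lpNorm r u * α := mul_le_mul_of_nonneg_left (h3.trans h1) (lpNorm_nonneg r u)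
      _ = α * lpNorm r u := mul_comm _ _

/-- Player 2's version of `isGreatest_support`, obtained by transposition. -/
lemma isGreatest_support_transpose {A1 A2 : Type*} [Fintype A1] [Fintype A2] {q r : ℝ≥0∞}
    (hq : 1 ≤ q) (h : 1 / q + 1 / r = 1) {α : ℝ} (hα : 0 ≤ α) {u : A1 → ℝ} {v : A2 → ℝ}
    (hu : u ∈ probSimplex A1) (hv : v ∈ probSimplex A2) :
    IsGreatest {t : ℝ | ∃ x ∈ {R : Matrix A1 A2 ℝ | opNorm 1 q R.transpose ≤ α},
      t = -bil x u v} (α * lpNorm r v) := by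
  convert isGreatest_support hq h hα hv hu using 1
  ext t
  constructor
  · rintro ⟨x, hx, rfl⟩
    exact ⟨x.transpose, hx, by rw [bil_transpose]⟩
  · rintro ⟨x, hx, rfl⟩
    exact ⟨x.transpose, by simpa using hx, by rw [bil_transpose]⟩

/-- The robust value is the nominal value minus the support function. -/
lemma V1_eq {A1 A2 : Type*} [Fintype A1] [Fintype A2] (M : Matrix A1 A2 ℝ)
    (R : Set (Matrix A1 A2 ℝ)) (u : A1 → ℝ) (v : A2 → ℝ) {s : ℝ}
    (hs : IsGreatest {t : ℝ | ∃ x ∈ R, t = -bil x u v} s) :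
    V1 M R u v = bil M u v - s := by
  refine IsLeast.csInf_eq ⟨?_, ?_⟩
  · obtain ⟨x, hx, rfl⟩ := hs.1
    exact ⟨x, hx, by rw [bil_add]; ring⟩
  · rintro _ ⟨x, hx, rfl⟩
    have := hs.2 ⟨x, hx, rfl⟩
    rw [bil_add]
    linarith

/-- A value of a function bounded above on `S` equals its supremum iff it is a maximum. -/
lemma eq_sSup_iff {T : Type*} {S : Set T} {g : T → ℝ} {a : T} (ha : a ∈ S) {C : ℝ}
    (hC : ∀ u ∈ S, g u ≤ C) :
    g a = sSup {t : ℝ | ∃ u ∈ S, t = g u} ↔ ∀ u ∈ S, g u ≤ g a := by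
  constructor
  · intro h u hu
    rw [h]
    refine le_csSup ⟨C, ?_⟩ ⟨u, hu, rfl⟩
    rintro _ ⟨w, hw, rfl⟩
    exact hC w hw
  · intro h
    symm
    refine IsGreatest.csSup_eq ⟨⟨a, ha, rfl⟩, ?_⟩
    rintro _ ⟨w, hw, rfl⟩
    exact h w hw

/-- A value of a function bounded below on `S` equals its infimum iff it is a minimum. -/
lemma eq_sInf_iff {T : Type*} {S : Set T} {g : T → ℝ} {a : T} (ha : a ∈ S) {C : ℝ}
    (hC : ∀ u ∈ S, C ≤ g u) :
    g a = sInf {t : ℝ | ∃ u ∈ S, t = g u} ↔ ∀ u ∈ S, g a ≤ g u := by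
  constructor
  · intro h u hu
    rw [h]
    refine csInf_le ⟨C, ?_⟩ ⟨u, hu, rfl⟩
    rintro _ ⟨w, hw, rfl⟩
    exact hC w hw
  · intro h
    symm
    refine IsLeast.csInf_eq ⟨⟨a, ha, rfl⟩, ?_⟩
    rintro _ ⟨w, hw, rfl⟩
    exact h w hw

/-- Theorem (efficiently player-decomposable ball uncertainty): for the
operator-norm-ball uncertainty sets `ℛ_1 = {R : ‖R‖_{1→q} ≤ α_1}` and
`ℛ_2 = {R : ‖Rᵀ‖_{1→q} ≤ α_2}`, the support functions satisfy
`σ_{ℛ_1}(−π_1π_2ᵀ) = α_1 ‖π_1‖_{q*}` and `σ_{ℛ_2}(−π_1π_2ᵀ) = α_2 ‖π_2‖_{q*}`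
on the simplices, and `(π_1,π_2)` is a robust Nash equilibrium of this robust
game iff it is a Nash equilibrium of the zero-sum regularized game with
payoff `f(π_1,π_2) = π_1ᵀ r* π_2 − α_1‖π_1‖_{q*} + α_2‖π_2‖_{q*}`
(player 1 maximizing, player 2 minimizing). -/
theorem efficient_ball_zero_sum {A1 A2 : Type*} [Fintype A1] [Fintype A2]
    (q qstar : ℝ≥0∞) (hq : 1 ≤ q) (hconj : 1 / q + 1 / qstar = 1)
    (α1 α2 : ℝ) (hα1 : 0 ≤ α1) (hα2 : 0 ≤ α2)
    (rstar : Matrix A1 A2 ℝ)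
    (R1 R2 : Set (Matrix A1 A2 ℝ))
    (hR1 : R1 = {R : Matrix A1 A2 ℝ | opNorm 1 q R ≤ α1})
    (hR2 : R2 = {R : Matrix A1 A2 ℝ | opNorm 1 q R.transpose ≤ α2}) :
    (∀ π1 ∈ probSimplex A1, ∀ π2 ∈ probSimplex A2,
      sSup {t : ℝ | ∃ x ∈ R1, t = -bil x π1 π2} = α1 * lpNorm qstar π1 ∧
      sSup {t : ℝ | ∃ x ∈ R2, t = -bil x π1 π2} = α2 * lpNorm qstar π2) ∧
    (∀ π1 ∈ probSimplex A1, ∀ π2 ∈ probSimplex A2,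
      ((V1 rstar R1 π1 π2
          = sSup {t : ℝ | ∃ u ∈ probSimplex A1, t = V1 rstar R1 u π2} ∧
        V2 rstar R2 π1 π2
          = sSup {t : ℝ | ∃ u ∈ probSimplex A2, t = V2 rstar R2 π1 u}) ↔
       (normReg qstar α1 α2 rstar π1 π2
          = sSup {t : ℝ | ∃ u ∈ probSimplex A1, t = normReg qstar α1 α2 rstar u π2} ∧
        normReg qstar α1 α2 rstar π1 π2
          = sInf {t : ℝ | ∃ u ∈ probSimplex A2, t = normReg qstar α1 α2 rstar π1 u}))) := by
  subst hR1 hR2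
  refine ⟨fun π1 h1 π2 h2 => ⟨(isGreatest_support hq hconj hα1 h1 h2).csSup_eq,
    (isGreatest_support_transpose hq hconj hα2 h1 h2).csSup_eq⟩, fun π1 h1 π2 h2 => ?_⟩
  have hV1 : ∀ u ∈ probSimplex A1,
      V1 rstar {R : Matrix A1 A2 ℝ | opNorm 1 q R ≤ α1} u π2
        = bil rstar u π2 - α1 * lpNorm qstar u :=
    fun u hu => V1_eq _ _ _ _ (isGreatest_support hq hconj hα1 hu h2)
  -- `V2` at payoff `rstar` is by definition `V1` at payoff `-rstar`.
  have hV2 : ∀ u ∈ probSimplex A2,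
      V2 rstar {R : Matrix A1 A2 ℝ | opNorm 1 q R.transpose ≤ α2} π1 u
        = -bil rstar π1 u - α2 * lpNorm qstar u := by
    intro u hu
    rw [← bil_neg]
    exact V1_eq (-rstar) _ _ _ (isGreatest_support_transpose hq hconj hα2 h1 hu)
  have hb1 : ∀ u ∈ probSimplex A1,
      bil rstar u π2 - α1 * lpNorm qstar u ≤ ∑ i, ∑ j, |rstar i j| := by
    intro u hu
    have := (abs_le.1 (abs_bil_le rstar hu h2)).2
    have := mul_nonneg hα1 (lpNorm_nonneg qstar u)
    linarith
  have hb2 : ∀ u ∈ probSimplex A2,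
      -bil rstar π1 u - α2 * lpNorm qstar u ≤ ∑ i, ∑ j, |rstar i j| := by
    intro u hu
    have := (abs_le.1 (abs_bil_le rstar h1 hu)).1
    have := mul_nonneg hα2 (lpNorm_nonneg qstar u)
    linarith
  rw [eq_sSup_iff (g := fun u => V1 rstar {R : Matrix A1 A2 ℝ | opNorm 1 q R ≤ α1} u π2) h1
      (fun u hu => (hV1 u hu).trans_le (hb1 u hu)),
    eq_sSup_iff
      (g := fun u => V2 rstar {R : Matrix A1 A2 ℝ | opNorm 1 q R.transpose ≤ α2} π1 u) h2
      (fun u hu => (hV2 u hu).trans_le (hb2 u hu)),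
    eq_sSup_iff (g := fun u => normReg qstar α1 α2 rstar u π2) h1
      (C := ∑ i, ∑ j, |rstar i j| + α2 * lpNorm qstar π2)
      (fun u hu => add_le_add_left (hb1 u hu) _),
    eq_sInf_iff (g := fun u => normReg qstar α1 α2 rstar π1 u) h2
      (C := -∑ i, ∑ j, |rstar i j| - α1 * lpNorm qstar π1)
      (fun u hu => by have := hb2 u hu; unfold normReg; linarith)]
  refine and_congr (forall₂_congr fun u hu => ?_) (forall₂_congr fun u hu => ?_)
  · rw [hV1 u hu, hV1 π1 h1]
    exact (add_le_add_iff_right _).symm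
  · rw [hV2 u hu, hV2 π2 h2]
    unfold normReg
    constructor <;> intro h <;> linarith
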